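/- Let I ⊆ ℝ be an open interval, ŝ₀ ∈ I, and let Y₀, Z₀ ∈ ℂ^{n×n} with Y₀ invertible such that H₀ := Z₀Y₀⁻¹ is symmetric with Im H₀ positive definite. Suppose Y, Z : I → ℂ^{n×n} are differentiable and satisfy Y'(s) = C Z(s) and Z'(s) = −D(s) Y(s) for all s ∈ I, with Y(ŝ₀) = Y₀ and Z(ŝ₀) = Z₀, and suppose Y(s) is invertible for every s ∈ I. Then H(s) := Z(s) Y(s)⁻¹ is differentiable on I, H(ŝ₀) = H₀, H(s) is symmetric with Im H(s) positive definite for all s ∈ I, and H solves the Riccati equation (d/ds)H(s) + H(s) C H(s) + D(s) = 0 on I. -/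

import Mathlib

open Matrix

attribute [local instance] Matrix.normedAddCommGroup Matrix.normedSpace

/-- The constant `n × n` matrix `C` with `C₁₁ = 0`, `C_jj = 2` for `j = 2, …, n`
and `C_jk = 0` off the diagonal (indices in `Fin n`, where `0 : Fin n`
corresponds to the index `1`). -/
def riccatiC (n : ℕ) : Matrix (Fin n) (Fin n) ℂ :=
  Matrix.of fun j k => if j = k ∧ (j : ℕ) ≠ 0 then 2 else 0

/-- `H` is a differentiable solution of the Riccati equation
`(d/ds) H + H C H + D = 0` on the set `I`. -/
def IsRiccatiSol (n : ℕ) (I : Set ℝ) (D : ℝ → Matrix (Fin n) (Fin n) ℝ)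
    (H : ℝ → Matrix (Fin n) (Fin n) ℂ) : Prop :=
  ∀ s ∈ I, HasDerivAt H (-(H s * riccatiC n * H s + (D s).map (fun x => (x : ℂ)))) s

/-!
For an anti-multiplicative linear map `τ` fixing the coefficients of `y' = c z`, `z' = -d y`, the
Wronskian `τ(y) z - τ(z) y` has derivative zero; in terms of `h = z y⁻¹` it equals
`τ(y) (h - τ(h)) y`, which is therefore constant. For matrices, `τ = transpose` shows that symmetry
of `h` propagates from one point to all others, and `τ = conjugate transpose` shows that the
imaginary parts of `h` at any two points are congruent, so that positive definiteness propagates as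
well.
-/

/-- A pair `y, z` of functions with values in a ring solves the linear system `y' = c z`,
`z' = -d y` on `I`, with derivatives taken within `I`. When `y` is invertible, `z y⁻¹` solves a
Riccati equation. -/
structure IsHamiltonianSol {𝕜 A : Type*} [NontriviallyNormedField 𝕜] [Ring A] [Module 𝕜 A]
    [TopologicalSpace A] [ContinuousSMul 𝕜 A] (c d : 𝕜 → A) (I : Set 𝕜) (y z : 𝕜 → A) : Prop where
  hasDerivWithinAt_fst : ∀ s ∈ I, HasDerivWithinAt y (c s * z s) I s
  hasDerivWithinAt_snd : ∀ s ∈ I, HasDerivWithinAt z (-(d s * y s)) I s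

/-- The Wronskian of `y` and `z` with respect to an anti-multiplicative map `τ`, such as the
transpose or the conjugate transpose of matrices. -/
def wronskian {A : Type*} [Ring A] (τ : A → A) (y z : A) : A :=
  τ y * z - τ z * y

theorem wronskian_mul_right {A : Type*} [Ring A] {τ : A → A}
    (hτ_mul : ∀ a b, τ (a * b) = τ b * τ a) (y h : A) :
    wronskian τ y (h * y) = τ y * (h - τ h) * y := by
  rw [wronskian, hτ_mul]
  noncomm_ring

theorem eq_of_hasDerivWithinAt_zero_of_convex {𝕜 E : Type*} [RCLike 𝕜] [NormedAddCommGroup E]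
    [NormedSpace 𝕜 E] {f : 𝕜 → E} {I : Set 𝕜} (hI : Convex ℝ I)
    (hf : ∀ s ∈ I, HasDerivWithinAt f 0 I s) {s t : 𝕜} (hs : s ∈ I) (ht : t ∈ I) : f s = f t := by
  have h := hI.norm_image_sub_le_of_norm_hasDerivWithin_le (C := 0) hf (by simp) ht hs
  rwa [zero_mul, norm_le_zero_iff, sub_eq_zero] at h

open scoped Ring

namespace IsHamiltonianSol

section Derivative

variable {𝕜 A : Type*} [NontriviallyNormedField 𝕜] [NormedRing A] [NormedAlgebra 𝕜 A]
  {c d : 𝕜 → A} {I : Set 𝕜} {y z : 𝕜 → A} {s : 𝕜}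

theorem hasDerivWithinAt_mul_inverse [HasSummableGeomSeries A] (hyz : IsHamiltonianSol c d I y z)
    (hs : s ∈ I) (hy : IsUnit (y s)) :
    HasDerivWithinAt (fun t => z t * (y t)⁻¹ʳ)
      (-(z s * (y s)⁻¹ʳ * c s * (z s * (y s)⁻¹ʳ) + d s)) I s := by
  have hinv : HasDerivWithinAt (fun t => (y t)⁻¹ʳ)
      (-((y s)⁻¹ʳ * (c s * z s) * (y s)⁻¹ʳ)) I s := by
    obtain ⟨u, hu⟩ := hy
    have h := hasFDerivAt_ringInverse (𝕜 := 𝕜) u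
    rw [← Ring.inverse_unit, hu] at h
    exact h.comp_hasDerivWithinAt s (hyz.hasDerivWithinAt_fst s hs)
  refine ((hyz.hasDerivWithinAt_snd s hs).fun_mul hinv).congr_deriv ?_
  rw [neg_mul, Ring.mul_inverse_cancel_right _ _ hy]
  noncomm_ring

theorem hasDerivWithinAt_wronskian (hyz : IsHamiltonianSol c d I y z) {τ : A →L[𝕜] A}
    (hτ_mul : ∀ a b, τ (a * b) = τ b * τ a) (hs : s ∈ I) (hc : τ (c s) = c s)
    (hd : τ (d s) = d s) :
    HasDerivWithinAt (fun t => wronskian τ (y t) (z t)) 0 I s := by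
  have hy := hyz.hasDerivWithinAt_fst s hs
  have hz := hyz.hasDerivWithinAt_snd s hs
  have hτy := τ.hasFDerivAt.comp_hasDerivWithinAt s hy
  have hτz := τ.hasFDerivAt.comp_hasDerivWithinAt s hz
  refine ((hτy.fun_mul hz).fun_sub (hτz.fun_mul hy)).congr_deriv ?_
  simp only [map_neg, hτ_mul, hc, hd, Function.comp_apply]
  noncomm_ring

end Derivative

theorem conj_sub_eq {𝕜 A : Type*} [RCLike 𝕜] [NormedRing A] [NormedAlgebra 𝕜 A]
    {c d y z : 𝕜 → A} {I : Set 𝕜} (hyz : IsHamiltonianSol c d I y z) (hI : Convex ℝ I)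
    {τ : A →L[𝕜] A} (hτ_mul : ∀ a b, τ (a * b) = τ b * τ a)
    (hc : ∀ s ∈ I, τ (c s) = c s) (hd : ∀ s ∈ I, τ (d s) = d s)
    (hy : ∀ s ∈ I, IsUnit (y s)) {s t : 𝕜} (hs : s ∈ I) (ht : t ∈ I) :
    τ (y s) * (z s * (y s)⁻¹ʳ - τ (z s * (y s)⁻¹ʳ)) * y s =
      τ (y t) * (z t * (y t)⁻¹ʳ - τ (z t * (y t)⁻¹ʳ)) * y t := by
  have hconst : wronskian τ (y s) (z s) = wronskian τ (y t) (z t) :=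
    eq_of_hasDerivWithinAt_zero_of_convex hI
      (fun r hr => hyz.hasDerivWithinAt_wronskian hτ_mul hr (hc r hr) (hd r hr)) hs ht
  rwa [← Ring.inverse_mul_cancel_right _ (z s) (hy s hs),
    ← Ring.inverse_mul_cancel_right _ (z t) (hy t ht), wronskian_mul_right hτ_mul,
    wronskian_mul_right hτ_mul] at hconst

end IsHamiltonianSol

section PosDef

open scoped ComplexOrder MatrixOrder ComplexStarModule

variable {m : Type*}

theorem posDef_map_ofReal_iff [Finite m] {𝕜 : Type*} [RCLike 𝕜] {M : Matrix m m ℝ} :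
    (M.map (fun x => (x : 𝕜))).PosDef ↔ M.PosDef := by
  cases nonempty_fintype m
  classical
  constructor <;> intro hM
  · have hherm : M.IsHermitian :=
      (isHermitian_map_iff (fun _ => by simp) RCLike.ofReal_injective).1 hM.isHermitian
    refine .of_dotProduct_mulVec_pos hherm fun x hx => ?_
    have hx' : (fun i => (x i : 𝕜)) ≠ 0 := fun h => hx <| by ext i; simpa using congrFun h i
    have hquad : ((star x ⬝ᵥ M *ᵥ x : ℝ) : 𝕜) =
        star (fun i => (x i : 𝕜)) ⬝ᵥ M.map (fun x => (x : 𝕜)) *ᵥ fun i => (x i : 𝕜) := by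
      simp [dotProduct, mulVec]
    rw [← RCLike.ofReal_pos (K := 𝕜), hquad]
    exact hM.dotProduct_mulVec_pos hx'
  · rw [← isStrictlyPositive_iff_posDef] at hM ⊢
    obtain ⟨B, hB, rfl⟩ := CStarAlgebra.isStrictlyPositive_iff_eq_star_mul_self.1 hM
    refine CStarAlgebra.isStrictlyPositive_iff_eq_star_mul_self.2
      ⟨_, hB.map (algebraMap ℝ 𝕜).mapMatrix, ?_⟩
    ext i j
    simp [mul_apply]

theorem coe_imaginaryPart_of_isSymm {H : Matrix m m ℂ} (hH : H.IsSymm) :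
    (ℑ H : Matrix m m ℂ) = (H.map Complex.im).map (fun x => (x : ℂ)) := by
  ext i j
  simp only [imaginaryPart_apply_coe, Matrix.smul_apply, Matrix.sub_apply, star_apply, hH.apply,
    RCLike.star_def, Complex.sub_conj, Complex.ofReal_mul, Complex.ofReal_ofNat,
    Complex.real_smul, Complex.ofReal_inv, smul_eq_mul, neg_mul, map_apply]
  linear_combination (-((H i j).im : ℂ)) * Complex.I_mul_I

theorem posDef_map_im_iff [Finite m] {H : Matrix m m ℂ} (hH : H.IsSymm) :
    (H.map Complex.im).PosDef ↔ (ℑ H : Matrix m m ℂ).PosDef := by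
  rw [coe_imaginaryPart_of_isSymm hH]
  exact (posDef_map_ofReal_iff (𝕜 := ℂ)).symm

end PosDef

section MatrixValued

variable {m : Type*} [Fintype m] [DecidableEq m] {I : Set ℝ}

-- Unlike the entrywise norm, the operator norm (same topology) makes matrices a normed algebra.
open scoped Matrix.Norms.Operator

theorem IsHamiltonianSol.hasDerivWithinAt_mul_inv {𝕜 : Type*} [RCLike 𝕜]
    {C D Y Z : ℝ → Matrix m m 𝕜} (hYZ : IsHamiltonianSol C D I Y Z) {s : ℝ}
    (hs : s ∈ I) (hY : IsUnit (Y s)) :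
    HasDerivWithinAt (fun t => Z t * (Y t)⁻¹)
      (-(Z s * (Y s)⁻¹ * C s * (Z s * (Y s)⁻¹) + D s)) I s := by
  simp only [nonsing_inv_eq_ringInverse]
  exact hYZ.hasDerivWithinAt_mul_inverse hs hY

theorem IsHamiltonianSol.isSymm_mul_inv {𝕜 : Type*} [RCLike 𝕜] {C D Y Z : ℝ → Matrix m m 𝕜}
    (hYZ : IsHamiltonianSol C D I Y Z) (hI : Convex ℝ I)
    (hC : ∀ s ∈ I, (C s).IsSymm) (hD : ∀ s ∈ I, (D s).IsSymm) (hY : ∀ s ∈ I, IsUnit (Y s))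
    {s t : ℝ} (hs : s ∈ I) (ht : t ∈ I) (ht_symm : (Z t * (Y t)⁻¹).IsSymm) :
    (Z s * (Y s)⁻¹).IsSymm := by
  let τ : Matrix m m 𝕜 →L[ℝ] Matrix m m 𝕜 :=
    ⟨(transposeLinearEquiv m m ℝ 𝕜).toLinearMap, continuous_id.matrix_transpose⟩
  have h : (Y s)ᵀ * (Z s * (Y s)⁻¹ - (Z s * (Y s)⁻¹)ᵀ) * Y s =
      (Y t)ᵀ * (Z t * (Y t)⁻¹ - (Z t * (Y t)⁻¹)ᵀ) * Y t := by
    simp only [nonsing_inv_eq_ringInverse]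
    exact hYZ.conj_sub_eq hI (τ := τ) transpose_mul hC hD hY hs ht
  rw [ht_symm.eq, sub_self, mul_zero, zero_mul, (hY s hs).mul_left_eq_zero,
    ((isUnit_transpose (Y s)).2 (hY s hs)).mul_right_eq_zero, sub_eq_zero] at h
  exact h.symm

open scoped ComplexOrder ComplexStarModule in
theorem IsHamiltonianSol.posDef_imaginaryPart_mul_inv_iff {C D Y Z : ℝ → Matrix m m ℂ}
    (hYZ : IsHamiltonianSol C D I Y Z) (hI : Convex ℝ I)
    (hC : ∀ s ∈ I, (C s).IsHermitian) (hD : ∀ s ∈ I, (D s).IsHermitian)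
    (hY : ∀ s ∈ I, IsUnit (Y s)) {s t : ℝ} (hs : s ∈ I) (ht : t ∈ I) :
    (ℑ (Z s * (Y s)⁻¹) : Matrix m m ℂ).PosDef ↔ (ℑ (Z t * (Y t)⁻¹) : Matrix m m ℂ).PosDef := by
  let τ : Matrix m m ℂ →L[ℝ] Matrix m m ℂ := (starL' ℝ : Matrix m m ℂ ≃L[ℝ] Matrix m m ℂ)
  have h : star (Y s) * (Z s * (Y s)⁻¹ - star (Z s * (Y s)⁻¹)) * Y s =
      star (Y t) * (Z t * (Y t)⁻¹ - star (Z t * (Y t)⁻¹)) * Y t := by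
    simp only [nonsing_inv_eq_ringInverse]
    exact hYZ.conj_sub_eq hI (τ := τ) star_mul hC hD hY hs ht
  have him : star (Y s) * (ℑ (Z s * (Y s)⁻¹) : Matrix m m ℂ) * Y s =
      star (Y t) * (ℑ (Z t * (Y t)⁻¹) : Matrix m m ℂ) * Y t := by
    simp only [imaginaryPart_apply_coe, mul_smul_comm, smul_mul_assoc, h]
  rw [← (hY s hs).posDef_star_left_conjugate_iff, him, (hY t ht).posDef_star_left_conjugate_iff]

end MatrixValued

theorem ZYinv_solves_riccati_general {m : Type*} [Fintype m] [DecidableEq m] {I : Set ℝ}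
    (hI : I.OrdConnected) {C D Y Z : ℝ → Matrix m m ℂ}
    (hCsymm : ∀ s ∈ I, (C s).IsSymm) (hCherm : ∀ s ∈ I, (C s).IsHermitian)
    (hDsymm : ∀ s ∈ I, (D s).IsSymm) (hDherm : ∀ s ∈ I, (D s).IsHermitian)
    (hYZ : IsHamiltonianSol C D I Y Z) (hY : ∀ s ∈ I, IsUnit (Y s)) {s₀ : ℝ} (hs₀ : s₀ ∈ I)
    (hsymm : (Z s₀ * (Y s₀)⁻¹).IsSymm) (hpos : ((Z s₀ * (Y s₀)⁻¹).map Complex.im).PosDef)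
    (s : ℝ) (hs : s ∈ I) :
    HasDerivWithinAt (fun t => Z t * (Y t)⁻¹)
      (-(Z s * (Y s)⁻¹ * C s * (Z s * (Y s)⁻¹) + D s)) I s ∧
    (Z s * (Y s)⁻¹).IsSymm ∧ ((Z s * (Y s)⁻¹).map Complex.im).PosDef := by
  have hsymm_s := hYZ.isSymm_mul_inv hI.convex hCsymm hDsymm hY hs hs₀ hsymm
  refine ⟨hYZ.hasDerivWithinAt_mul_inv hs (hY s hs), hsymm_s, ?_⟩
  rw [posDef_map_im_iff hsymm] at hpos
  rw [posDef_map_im_iff hsymm_s]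
  exact (hYZ.posDef_imaginaryPart_mul_inv_iff hI.convex hCherm hDherm hY hs hs₀).2 hpos

theorem riccatiC_eq_diagonal (n : ℕ) :
    riccatiC n = diagonal fun j : Fin n => if (j : ℕ) ≠ 0 then 2 else 0 := by
  ext j k
  simp only [riccatiC, of_apply, diagonal_apply, ite_and]

theorem isSymm_riccatiC (n : ℕ) : (riccatiC n).IsSymm :=
  riccatiC_eq_diagonal n ▸ isSymm_diagonal _

theorem isHermitian_riccatiC (n : ℕ) : (riccatiC n).IsHermitian := by
  rw [riccatiC_eq_diagonal, isHermitian_diagonal_iff]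
  intro j
  split_ifs
  exacts [.ofNat 2, .zero _]

/-- If `Y, Z` solve the linear system `Y' = C Z`, `Z' = -D Y` on an
open interval `I` with `Y(ŝ₀) = Y₀` invertible, `Z(ŝ₀) = Z₀`, `H₀ = Z₀ Y₀⁻¹` symmetric
with positive definite imaginary part, and `Y(s)` is invertible on `I`, then
`H(s) = Z(s) Y(s)⁻¹` is differentiable, matches the initial value, is symmetric with
positive definite imaginary part, and solves the Riccati equation `H' + HCH + D = 0` on `I`. -/
theorem ZYinv_solves_riccati
    (n : ℕ) (hn : 1 ≤ n) (I : Set ℝ) (hIopen : IsOpen I) (hIconn : I.OrdConnected)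
    (D : ℝ → Matrix (Fin n) (Fin n) ℝ) (hDcont : ContinuousOn D I)
    (hDsymm : ∀ s ∈ I, (D s).IsSymm)
    (s₀ : ℝ) (hs₀ : s₀ ∈ I)
    (Y₀ Z₀ : Matrix (Fin n) (Fin n) ℂ) (hY₀ : IsUnit Y₀)
    (hH₀symm : (Z₀ * Y₀⁻¹).IsSymm)
    (hH₀pos : ((Z₀ * Y₀⁻¹).map Complex.im).PosDef)
    (Y Z : ℝ → Matrix (Fin n) (Fin n) ℂ)
    (hY : ∀ s ∈ I, HasDerivAt Y (riccatiC n * Z s) s)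
    (hZ : ∀ s ∈ I, HasDerivAt Z (-((D s).map (fun x => (x : ℂ)) * Y s)) s)
    (hY0 : Y s₀ = Y₀) (hZ0 : Z s₀ = Z₀)
    (hYinv : ∀ s ∈ I, IsUnit (Y s)) :
    Z s₀ * (Y s₀)⁻¹ = Z₀ * Y₀⁻¹ ∧
    IsRiccatiSol n I D (fun s => Z s * (Y s)⁻¹) ∧
    ∀ s ∈ I, (Z s * (Y s)⁻¹).IsSymm ∧ ((Z s * (Y s)⁻¹).map Complex.im).PosDef := by
  subst hY0 hZ0
  have h := ZYinv_solves_riccati_general hIconn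
    (fun _ _ => isSymm_riccatiC n) (fun _ _ => isHermitian_riccatiC n)
    (fun s hs => (hDsymm s hs).map _)
    (fun s hs => IsHermitian.map (hDsymm s hs) _ fun x => (Complex.conj_ofReal x).symm)
    ⟨fun s hs => (hY s hs).hasDerivWithinAt, fun s hs => (hZ s hs).hasDerivWithinAt⟩
    hYinv hs₀ hH₀symm hH₀pos
  exact ⟨rfl, fun s hs => (h s hs).1.hasDerivAt (hIopen.mem_nhds hs), fun s hs => (h s hs).2⟩
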